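/- Minimal Lorentzian surfaces lying in a Lorentzian hyperplane have pointwise 1-type Gauss map of the first kind (Proposition 3.2(i) / Corollary 3.7 direction, explicit form): in the setting of a minimal Lorentzian surface x(s,t) = α(s) + β(t) in null coordinates, suppose there exist a constant vector e₄ ∈ ℝ⁴ with B(e₄,e₄) > 0 and a constant c ∈ ℝ such that B(x(s,t), e₄) = c for all (s,t). Then at every point η₁ ∧ η₂ = 0, and consequently the Gauss map satisfies Δν = 2K·ν with K := B(η₁,η₂)/m⁴, where Δν := (2/m²)·∂²ν/∂s∂t; i.e. ν is of pointwise 1-type of the first kind with f = 2K. -/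

import Mathlib

noncomputable section

/-- The Minkowski bilinear form on `ℝ⁴ = Fin 4 → ℝ`:
`B(v,w) = -v₀w₀ + v₁w₁ + v₂w₂ + v₃w₃`. -/
def B4 (v w : Fin 4 → ℝ) : ℝ :=
  -(v 0 * w 0) + v 1 * w 1 + v 2 * w 2 + v 3 * w 3

/-- The wedge product `v ∧ w`, modelled concretely as the antisymmetric array
`(i,j) ↦ vᵢwⱼ - vⱼwᵢ` (a faithful model of the second exterior power `Λ²(ℝ⁴)`). -/
def wedge (v w : Fin 4 → ℝ) : Fin 4 → Fin 4 → ℝ :=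
  fun i j => v i * w j - v j * w i

/-- Partial derivative of a two-parameter map with respect to the first variable. -/
def pds {E : Type*} [NormedAddCommGroup E] [NormedSpace ℝ E]
    (x : ℝ → ℝ → E) (s t : ℝ) : E :=
  deriv (fun u => x u t) s

/-- Partial derivative of a two-parameter map with respect to the second variable. -/
def pdt {E : Type*} [NormedAddCommGroup E] [NormedSpace ℝ E]
    (x : ℝ → ℝ → E) (s t : ℝ) : E :=
  deriv (fun u => x s u) t

/-- `m²(s,t) = -B(α'(s), β'(t))`, the conformal factor of the induced metric
`-m²(ds⊗dt + dt⊗ds)` of the minimal Lorentzian surface `x(s,t) = α(s) + β(t)`. -/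
def msq (α β : ℝ → Fin 4 → ℝ) (s t : ℝ) : ℝ :=
  -B4 (deriv α s) (deriv β t)

/-- `η₁ = h(∂s,∂s)`: the component of `x_{ss} = α''` orthogonal to the tangent
plane `span{α'(s), β'(t)}`. -/
def eta1 (α β : ℝ → Fin 4 → ℝ) (s t : ℝ) : Fin 4 → ℝ :=
  deriv (deriv α) s
    - (B4 (deriv (deriv α) s) (deriv β t) / B4 (deriv α s) (deriv β t)) • deriv α s

/-- `η₂ = h(∂t,∂t)`: the component of `x_{tt} = β''` orthogonal to the tangent
plane `span{α'(s), β'(t)}`. -/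
def eta2 (α β : ℝ → Fin 4 → ℝ) (s t : ℝ) : Fin 4 → ℝ :=
  deriv (deriv β) t
    - (B4 (deriv (deriv β) t) (deriv α s) / B4 (deriv α s) (deriv β t)) • deriv β t

/-- The Gauss map `ν = (1/m²)·(α'(s) ∧ β'(t))`, valued in (a model of) `Λ²(ℝ⁴)`. -/
def gaussMap (α β : ℝ → Fin 4 → ℝ) (s t : ℝ) : Fin 4 → Fin 4 → ℝ :=
  (1 / msq α β s t) • wedge (deriv α s) (deriv β t)

/-- The Laplace–Beltrami operator of the induced metric `-m²(ds⊗dt + dt⊗ds)`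
(with the sign convention of the paper) acting on `Λ²(ℝ⁴)`-valued maps:
`Δξ = (2/m²)·∂²ξ/∂s∂t`. -/
def lap (α β : ℝ → Fin 4 → ℝ) (ξ : ℝ → ℝ → (Fin 4 → Fin 4 → ℝ)) (s t : ℝ) :
    Fin 4 → Fin 4 → ℝ :=
  (2 / msq α β s t) • pds (pdt ξ) s t


theorem aux_B4_deriv {f g : ℝ → Fin 4 → ℝ} {f' g' : Fin 4 → ℝ} {x : ℝ}
    (hf : HasDerivAt f f' x) (hg : HasDerivAt g g' x) :
    HasDerivAt (fun y => B4 (f y) (g y)) (B4 f' (g x) + B4 (f x) g') x := by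
  have F := hasDerivAt_pi.1 hf
  have G := hasDerivAt_pi.1 hg
  unfold B4
  refine (((((F 0).mul (G 0)).neg.add ((F 1).mul (G 1))).add ((F 2).mul (G 2))).add
    ((F 3).mul (G 3))).congr_deriv ?_
  ring

theorem aux_wedge_deriv {f g : ℝ → Fin 4 → ℝ} {f' g' : Fin 4 → ℝ} {x : ℝ}
    (hf : HasDerivAt f f' x) (hg : HasDerivAt g g' x) :
    HasDerivAt (fun y => wedge (f y) (g y)) (wedge f' (g x) + wedge (f x) g') x := by
  have F := hasDerivAt_pi.1 hf
  have G := hasDerivAt_pi.1 hg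
  refine hasDerivAt_pi.2 fun i => hasDerivAt_pi.2 fun j => ?_
  unfold wedge
  refine (((F i).mul (G j)).sub ((F j).mul (G i))).congr_deriv ?_
  simp only [Pi.add_apply]
  ring

theorem aux_wedge_zero {u v a b e : Fin 4 → ℝ} (haa : B4 a a = 0) (hbb : B4 b b = 0)
    (hab : B4 a b ≠ 0) (hee : B4 e e ≠ 0) (hae : B4 a e = 0) (hbe : B4 b e = 0)
    (hua : B4 u a = 0) (hub : B4 u b = 0) (hue : B4 u e = 0)
    (hva : B4 v a = 0) (hvb : B4 v b = 0) (hve : B4 v e = 0) : wedge u v = 0 := by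
  have hdep : ¬ LinearIndependent ℝ ![u, v, a, b, e] := by
    intro h
    have := h.fintype_card_le_finrank
    simp at this
  rw [Fintype.not_linearIndependent_iff] at hdep
  obtain ⟨g, hg, i, hi⟩ := hdep
  have hc : ∀ k, g 0 * u k + g 1 * v k + g 2 * a k + g 3 * b k + g 4 * e k = 0 := by
    intro k
    have := congrFun hg k
    simpa [Fin.sum_univ_five] using this
  have h0 := hc 0
  have h1 := hc 1
  have h2 := hc 2
  have h3 := hc 3
  have g3 : g 3 = 0 := by
    have : g 3 * B4 a b = 0 := by
      unfold B4 at *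
      linear_combination (-a 0) * h0 + a 1 * h1 + a 2 * h2 + a 3 * h3 - g 0 * hua - g 1 * hva
        - g 2 * haa - g 4 * hae
    simpa [hab] using this
  have g2 : g 2 = 0 := by
    have : g 2 * B4 a b = 0 := by
      unfold B4 at *
      linear_combination (-b 0) * h0 + b 1 * h1 + b 2 * h2 + b 3 * h3 - g 0 * hub - g 1 * hvb
        - g 3 * hbb - g 4 * hbe
    simpa [hab] using this
  have g4 : g 4 = 0 := by
    have : g 4 * B4 e e = 0 := by
      unfold B4 at *
      linear_combination (-e 0) * h0 + e 1 * h1 + e 2 * h2 + e 3 * h3 - g 0 * hue - g 1 * hve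
        - g 2 * hae - g 3 * hbe
    simpa [hee] using this
  have hk : ∀ k, g 0 * u k + g 1 * v k = 0 := by
    intro k
    simpa [g2, g3, g4] using hc k
  have h01 : g 0 ≠ 0 ∨ g 1 ≠ 0 := by
    fin_cases i
    · exact Or.inl hi
    · exact Or.inr hi
    · exact absurd g2 hi
    · exact absurd g3 hi
    · exact absurd g4 hi
  funext p q
  simp only [wedge, Pi.zero_apply]
  rcases h01 with h | h
  · apply mul_left_cancel₀ h
    linear_combination v q * hk p - v p * hk q
  · apply mul_left_cancel₀ h
    linear_combination u p * hk q - u q * hk p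

theorem aux_derivs {I : Set ℝ} (hI : IsOpen I) {α : ℝ → Fin 4 → ℝ}
    (hα : ContDiffOn ℝ (⊤ : ℕ∞) α I) {s : ℝ} (hs : s ∈ I) :
    HasDerivAt α (deriv α s) s ∧ HasDerivAt (deriv α) (deriv (deriv α) s) s := by
  constructor
  · exact ((hα.differentiableOn (by simp)).differentiableAt (hI.mem_nhds hs)).hasDerivAt
  · have h : ContDiffOn ℝ 1 (deriv α) I :=
      (contDiffOn_infty.1 hα 2).deriv_of_isOpen hI (by norm_num [one_add_one_eq_two])
    exact ((h.differentiableOn (by simp)).differentiableAt (hI.mem_nhds hs)).hasDerivAt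

theorem aux_const {I : Set ℝ} (hI : IsOpen I) {f : ℝ → ℝ} {c d s : ℝ} (hs : s ∈ I)
    (hf : ∀ y ∈ I, f y = c) (hd : HasDerivAt f d s) : d = 0 := by
  have h : f =ᶠ[nhds s] fun _ => c := by
    filter_upwards [hI.mem_nhds hs] with y hy using hf y hy
  exact hd.unique ((hasDerivAt_const s c).congr_of_eventuallyEq h)

theorem aux_B4_comm (v w : Fin 4 → ℝ) : B4 v w = B4 w v := by
  unfold B4; ring

theorem aux_B4_sub (v w z : Fin 4 → ℝ) (r : ℝ) : B4 (v - r • w) z = B4 v z - r * B4 w z := by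
  simp [B4]; ring

theorem aux_B4_zero (v : Fin 4 → ℝ) : B4 v 0 = 0 := by
  simp [B4]

/-- Proposition 3.2(i) / Corollary 3.7 direction: a minimal Lorentzian surface lying
in a Lorentzian hyperplane `{y : B(y,e₄) = c}` (with `B(e₄,e₄) > 0`) has `η₁ ∧ η₂ ≡ 0`
and its Gauss map satisfies `Δν = 2K·ν` with `K = B(η₁,η₂)/m⁴`: pointwise 1-type of
the first kind. -/
theorem hyperplane_implies_pointwise_one_type_first_kind
    (I₁ I₂ : Set ℝ) (hI₁ : IsOpen I₁) (hI₂ : IsOpen I₂)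
    (hI₁' : I₁.OrdConnected) (hI₂' : I₂.OrdConnected)
    (α β : ℝ → Fin 4 → ℝ)
    (hα : ContDiffOn ℝ (⊤ : ℕ∞) α I₁) (hβ : ContDiffOn ℝ (⊤ : ℕ∞) β I₂)
    (hαnull : ∀ s ∈ I₁, B4 (deriv α s) (deriv α s) = 0)
    (hβnull : ∀ t ∈ I₂, B4 (deriv β t) (deriv β t) = 0)
    (hneg : ∀ s ∈ I₁, ∀ t ∈ I₂, B4 (deriv α s) (deriv β t) < 0)
    (e₄ : Fin 4 → ℝ) (he₄ : 0 < B4 e₄ e₄) (c : ℝ)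
    (hplane : ∀ s ∈ I₁, ∀ t ∈ I₂, B4 (α s + β t) e₄ = c) :
    ∀ s ∈ I₁, ∀ t ∈ I₂,
      wedge (eta1 α β s t) (eta2 α β s t) = 0 ∧
      lap α β (gaussMap α β) s t =
        (2 * (B4 (eta1 α β s t) (eta2 α β s t) / (msq α β s t) ^ 2)) •
          gaussMap α β s t := by
  have dα := fun s (hs : s ∈ I₁) => aux_derivs hI₁ hα hs
  have dβ := fun t (ht : t ∈ I₂) => aux_derivs hI₂ hβ ht
  intro s hs t ht
  have hF : B4 (deriv α s) (deriv β t) ≠ 0 := (hneg s hs t ht).ne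
  have hae : ∀ s ∈ I₁, B4 (deriv α s) e₄ = 0 := by
    intro s hs
    have := aux_B4_deriv ((dα s hs).1.add_const (β t)) (hasDerivAt_const s e₄)
    rw [aux_B4_zero, add_zero] at this
    exact aux_const hI₁ hs (fun y hy => hplane y hy t ht) this
  have hbe : ∀ t ∈ I₂, B4 (deriv β t) e₄ = 0 := by
    intro t ht
    have := aux_B4_deriv ((dβ t ht).1.const_add (α s)) (hasDerivAt_const t e₄)
    rw [aux_B4_zero, add_zero] at this
    exact aux_const hI₂ ht (fun y hy => hplane s hs y hy) this
  have haae : B4 (deriv (deriv α) s) e₄ = 0 := by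
    have := aux_B4_deriv (dα s hs).2 (hasDerivAt_const s e₄)
    rw [aux_B4_zero, add_zero] at this
    exact aux_const hI₁ hs hae this
  have hbbe : B4 (deriv (deriv β) t) e₄ = 0 := by
    have := aux_B4_deriv (dβ t ht).2 (hasDerivAt_const t e₄)
    rw [aux_B4_zero, add_zero] at this
    exact aux_const hI₂ ht hbe this
  have haa : B4 (deriv (deriv α) s) (deriv α s) = 0 := by
    have := aux_const hI₁ hs hαnull (aux_B4_deriv (dα s hs).2 (dα s hs).2)
    rw [aux_B4_comm (deriv α s)] at this
    linarith
  have hbb : B4 (deriv (deriv β) t) (deriv β t) = 0 := by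
    have := aux_const hI₂ ht hβnull (aux_B4_deriv (dβ t ht).2 (dβ t ht).2)
    rw [aux_B4_comm (deriv β t)] at this
    linarith
  have hw : wedge (eta1 α β s t) (eta2 α β s t) = 0 := by
    apply aux_wedge_zero (hαnull s hs) (hβnull t ht) hF he₄.ne' (hae s hs) (hbe t ht) <;>
      simp only [eta1, eta2, aux_B4_sub]
    · rw [haa, hαnull s hs]; ring
    · field_simp; ring
    · rw [haae, hae s hs]; ring
    · rw [aux_B4_comm (deriv β t)]; field_simp; ring
    · rw [hbb, hβnull t ht]; ring
    · rw [hbbe, hbe t ht]; ring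
  refine ⟨hw, ?_⟩
  have h1 : ∀ u ∈ I₁, pdt (gaussMap α β) u t =
      (-(B4 (deriv α u) (deriv β t))⁻¹) • wedge (deriv α u) (deriv (deriv β) t) +
      (B4 (deriv α u) (deriv (deriv β) t) / B4 (deriv α u) (deriv β t) ^ 2) •
        wedge (deriv α u) (deriv β t) := by
    intro u hu
    have hFu : B4 (deriv α u) (deriv β t) ≠ 0 := (hneg u hu t ht).ne
    have hB := aux_B4_deriv (hasDerivAt_const t (deriv α u)) (dβ t ht).2
    have hW := aux_wedge_deriv (hasDerivAt_const t (deriv α u)) (dβ t ht).2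
    have := (((hB.fun_neg).fun_inv (neg_ne_zero.2 hFu)).fun_smul hW).deriv
    simp only [pdt, gaussMap, msq, one_div]
    rw [this]
    funext i j
    simp only [Pi.add_apply, Pi.smul_apply, smul_eq_mul, wedge, B4, Pi.zero_apply] at hFu ⊢
    field_simp
    ring
  have h2 : pds (pdt (gaussMap α β)) s t =
      (B4 (eta1 α β s t) (eta2 α β s t) / B4 (deriv α s) (deriv β t) ^ 2) •
        wedge (deriv α s) (deriv β t) := by
    unfold pds
    have he : (fun u => pdt (gaussMap α β) u t) =ᶠ[nhds s] fun u =>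
        (-(B4 (deriv α u) (deriv β t))⁻¹) • wedge (deriv α u) (deriv (deriv β) t) +
        (B4 (deriv α u) (deriv (deriv β) t) / B4 (deriv α u) (deriv β t) ^ 2) •
          wedge (deriv α u) (deriv β t) := by
      filter_upwards [hI₁.mem_nhds hs] with y hy using h1 y hy
    rw [he.deriv_eq]
    have hB := aux_B4_deriv (dα s hs).2 (hasDerivAt_const s (deriv β t))
    have hB' := aux_B4_deriv (dα s hs).2 (hasDerivAt_const s (deriv (deriv β) t))
    have hW := aux_wedge_deriv (dα s hs).2 (hasDerivAt_const s (deriv β t))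
    have hW' := aux_wedge_deriv (dα s hs).2 (hasDerivAt_const s (deriv (deriv β) t))
    have := ((((hB.fun_inv hF).fun_neg).fun_smul hW').fun_add
      ((hB'.fun_div (hB.fun_pow 2) (pow_ne_zero 2 hF)).fun_smul hW)).deriv
    rw [this]
    funext i j
    have hwij := congrFun (congrFun hw i) j
    have hη : B4 (eta1 α β s t) (eta2 α β s t) = B4 (deriv (deriv α) s) (deriv (deriv β) t)
        - B4 (deriv (deriv α) s) (deriv β t) * B4 (deriv α s) (deriv (deriv β) t)
          / B4 (deriv α s) (deriv β t) := by
      simp only [eta1, eta2, aux_B4_sub]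
      rw [aux_B4_comm _ (_ - _), aux_B4_comm (deriv α s) (_ - _), aux_B4_sub, aux_B4_sub,
        aux_B4_comm (deriv (deriv β) t), aux_B4_comm (deriv (deriv β) t),
        aux_B4_comm (deriv β t), aux_B4_comm (deriv β t)]
      field_simp
      ring
    rw [hη]
    simp only [eta1, eta2, wedge, Pi.add_apply, Pi.smul_apply, Pi.sub_apply, smul_eq_mul,
      Pi.zero_apply, aux_B4_zero, aux_B4_comm (deriv (deriv β) t) (deriv α s)] at hwij ⊢
    generalize B4 (deriv α s) (deriv β t) = F at *
    generalize B4 (deriv (deriv α) s) (deriv β t) = P at *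
    generalize B4 (deriv α s) (deriv (deriv β) t) = Q at *
    generalize B4 (deriv (deriv α) s) (deriv (deriv β) t) = R at *
    rw [← sub_eq_zero]
    refine Eq.trans ?_ ((congrArg (fun z => -F⁻¹ * z) hwij).trans (mul_zero _))
    field_simp
    ring
  unfold lap
  rw [h2]
  unfold gaussMap msq
  rw [smul_smul, smul_smul]
  congr 1
  field_simp
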